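/- arXiv:2604.28108 — 2 statements merged into one kernel-verified Lean document; each statement's English description precedes it below -/
import Mathlib

section
/- Let C ∈ ℝ^{p×n}, Ĉ ∈ ℝ^{p×n_r}, P ∈ ℝ^{n×n_r}, S ∈ ℝ^{n×m_r}, and let M ∈ ℝ^{n×n} be symmetric with CᵀC ⪯ M (i.e., M − CᵀC is positive semidefinite). Suppose CP = Ĉ and CS = 0. Then for every x ∈ ℝⁿ, x̂ ∈ ℝ^{n_r}, û ∈ ℝ^{m_r} and ε ≥ 0, if (x − Px̂ − Sû)ᵀ M (x − Px̂ − Sû) ≤ ε², then ‖Cx − Ĉx̂‖ ≤ ε, where ‖·‖ is the Euclidean norm on ℝᵖ. -/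
open Matrix

/-- The Euclidean norm of a vector in `Fin k → ℝ`. -/
noncomputable def euclNorm {k : ℕ} (v : Fin k → ℝ) : ℝ :=
  ‖(WithLp.equiv 2 (Fin k → ℝ)).symm v‖

theorem star_dotProduct_conjTranspose_mul_self_mulVec {R m n : Type*} [NonUnitalSemiring R]
    [StarRing R] [Fintype m] [Fintype n] (A : Matrix m n R) (x : n → R) :
    star x ⬝ᵥ (Aᴴ * A) *ᵥ x = star (A *ᵥ x) ⬝ᵥ A *ᵥ x := by
  rw [← mulVec_mulVec, dotProduct_mulVec, star_mulVec]

theorem star_dotProduct_mulVec_le_of_posSemidef_sub {R n : Type*} [Ring R] [StarRing R]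
    [PartialOrder R] [IsOrderedAddMonoid R] [Fintype n] {A B : Matrix n n R}
    (hAB : (B - A).PosSemidef) (x : n → R) :
    star x ⬝ᵥ A *ᵥ x ≤ star x ⬝ᵥ B *ᵥ x := by
  have hnonneg : 0 ≤ star x ⬝ᵥ (B - A) *ᵥ x := hAB.dotProduct_mulVec_nonneg x
  rwa [sub_mulVec, dotProduct_sub, sub_nonneg] at hnonneg

theorem mulVec_sub_mulVec_sub_mulVec_of_mul_eq_zero {R l m n k : Type*} [NonUnitalRing R]
    [Fintype m] [Fintype n] [Fintype k] (C : Matrix l m R) (P : Matrix m n R)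
    {S : Matrix m k R} (hCS : C * S = 0) (x : m → R) (y : n → R) (u : k → R) :
    C *ᵥ (x - P *ᵥ y - S *ᵥ u) = C *ᵥ x - (C * P) *ᵥ y := by
  rw [mulVec_sub, mulVec_sub, mulVec_mulVec, mulVec_mulVec, hCS, zero_mulVec, sub_zero]

theorem euclNorm_sq_eq_dotProduct {k : ℕ} (v : Fin k → ℝ) : euclNorm v ^ 2 = v ⬝ᵥ v :=
  (real_inner_self_eq_norm_sq _).symm

theorem euclNorm_mulVec_sq_le_of_posSemidef_sub {n : Type*} [Fintype n] {p : ℕ}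
    {C : Matrix (Fin p) n ℝ} {M : Matrix n n ℝ} (hCM : (M - Cᵀ * C).PosSemidef) (e : n → ℝ) :
    euclNorm (C *ᵥ e) ^ 2 ≤ e ⬝ᵥ M *ᵥ e :=
  calc euclNorm (C *ᵥ e) ^ 2
    _ = C *ᵥ e ⬝ᵥ C *ᵥ e := euclNorm_sq_eq_dotProduct _
    _ = e ⬝ᵥ (Cᵀ * C) *ᵥ e := (star_dotProduct_conjTranspose_mul_self_mulVec C e).symm
    _ ≤ e ⬝ᵥ M *ᵥ e := star_dotProduct_mulVec_le_of_posSemidef_sub hCM e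

/-- If `M` is symmetric with `CᵀC ⪯ M`, `C*P = Chat` and `C*S = 0`,
then `(x − P·xhat − S·uhat)ᵀ M (x − P·xhat − S·uhat) ≤ ε²` implies
`‖C·x − Chat·xhat‖ ≤ ε` (Euclidean norm). -/
theorem output_error_bound {n nr mr p : ℕ}
    (C : Matrix (Fin p) (Fin n) ℝ) (Chat : Matrix (Fin p) (Fin nr) ℝ)
    (P : Matrix (Fin n) (Fin nr) ℝ) (S : Matrix (Fin n) (Fin mr) ℝ)
    (M : Matrix (Fin n) (Fin n) ℝ)
    (hMsymm : M.IsSymm) (hCM : (M - Cᵀ * C).PosSemidef)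
    (hCP : C * P = Chat) (hCS : C * S = 0)
    (ε : ℝ) (hε : 0 ≤ ε) :
    ∀ (x : Fin n → ℝ) (xhat : Fin nr → ℝ) (uhat : Fin mr → ℝ),
      (x - P.mulVec xhat - S.mulVec uhat) ⬝ᵥ M.mulVec (x - P.mulVec xhat - S.mulVec uhat) ≤ ε ^ 2 →
      euclNorm (C.mulVec x - Chat.mulVec xhat) ≤ ε := by
  intro x xhat uhat herror
  have houtput : C *ᵥ (x - P *ᵥ xhat - S *ᵥ uhat) = C *ᵥ x - Chat *ᵥ xhat :=
    hCP ▸ mulVec_sub_mulVec_sub_mulVec_of_mul_eq_zero C P hCS x xhat uhat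
  rw [← houtput]
  exact le_of_sq_le_sq ((euclNorm_mulVec_sq_le_of_posSemidef_sub hCM _).trans herror) hε
end

section
/- Let A ∈ ℝ^{n×n}, B ∈ ℝ^{n×m}, Â ∈ ℝ^{n_r×n_r}, B̂ ∈ ℝ^{n_r×m_r}, K ∈ ℝ^{m×n}, Q ∈ ℝ^{m×n_r}, R ∈ ℝ^{m×m_r}, P ∈ ℝ^{n×n_r}, S ∈ ℝ^{n×m_r}. Let x : ℝ → ℝⁿ, x̂ : ℝ → ℝ^{n_r}, û : ℝ → ℝ^{m_r} be differentiable at a time t, and define e(s) = x(s) − P x̂(s) − S û(s). If x'(t) = A x(t) + B (K e(t) + Q x̂(t) + R û(t)) and x̂'(t) = Â x̂(t) + B̂ û(t), then e is differentiable at t with e'(t) = (A + BK) e(t) + (AP − PÂ + BQ) x̂(t) + (AS + BR − PB̂) û(t) − S û'(t). -/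
open Matrix

section MatrixIdentity

variable {n m p q α : Type*} [Fintype n] [Fintype m] [Fintype p] [Fintype q] [NonUnitalRing α]

theorem mulVec_closedLoop_sub_mulVec_reduced
    (A : Matrix n n α) (B : Matrix n m α) (Ahat : Matrix p p α) (Bhat : Matrix p q α)
    (K : Matrix m n α) (Q : Matrix m p α) (R : Matrix m q α) (P : Matrix n p α)
    (S : Matrix n q α) {x e : n → α} {xhat : p → α} {uhat : q → α}
    (he : e = x - P *ᵥ xhat - S *ᵥ uhat) :
    A *ᵥ x + B *ᵥ (K *ᵥ e + Q *ᵥ xhat + R *ᵥ uhat) - P *ᵥ (Ahat *ᵥ xhat + Bhat *ᵥ uhat) =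
      (A + B * K) *ᵥ e + (A * P - P * Ahat + B * Q) *ᵥ xhat +
        (A * S + B * R - P * Bhat) *ᵥ uhat := by
  have hx : x = e + P *ᵥ xhat + S *ᵥ uhat := by rw [he]; abel
  rw [hx]
  simp only [add_mulVec, sub_mulVec, mulVec_add, mulVec_mulVec]
  abel

end MatrixIdentity

section Derivative

variable {𝕜 𝔸 : Type*} [NontriviallyNormedField 𝕜] [NormedRing 𝔸] [NormedAlgebra 𝕜 𝔸]
  {n m p q : Type*} [Fintype n]

theorem hasDerivAt_mulVec (M : Matrix m n 𝔸) {v : 𝕜 → n → 𝔸} {v' : n → 𝔸} {t : 𝕜}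
    (hv : HasDerivAt v v' t) : HasDerivAt (fun s => M *ᵥ v s) (M *ᵥ v') t :=
  hasDerivAt_pi.2 fun i =>
    HasDerivAt.fun_sum fun j _ => (hasDerivAt_pi.1 hv j).const_mul (M i j)

variable [Fintype m] [Fintype p] [Fintype q]

theorem error_dynamics_general
    (A : Matrix n n 𝔸) (B : Matrix n m 𝔸) (Ahat : Matrix p p 𝔸) (Bhat : Matrix p q 𝔸)
    (K : Matrix m n 𝔸) (Q : Matrix m p 𝔸) (R : Matrix m q 𝔸) (P : Matrix n p 𝔸)
    (S : Matrix n q 𝔸) {x e : 𝕜 → n → 𝔸} {xhat : 𝕜 → p → 𝔸} {uhat : 𝕜 → q → 𝔸}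
    (he : ∀ s, e s = x s - P *ᵥ xhat s - S *ᵥ uhat s) {t : 𝕜} {uhat' : q → 𝔸}
    (hx : HasDerivAt x (A *ᵥ x t + B *ᵥ (K *ᵥ e t + Q *ᵥ xhat t + R *ᵥ uhat t)) t)
    (hxhat : HasDerivAt xhat (Ahat *ᵥ xhat t + Bhat *ᵥ uhat t) t)
    (huhat : HasDerivAt uhat uhat' t) :
    HasDerivAt e
      ((A + B * K) *ᵥ e t + (A * P - P * Ahat + B * Q) *ᵥ xhat t +
        (A * S + B * R - P * Bhat) *ᵥ uhat t - S *ᵥ uhat') t := by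
  have he' : HasDerivAt e
      (A *ᵥ x t + B *ᵥ (K *ᵥ e t + Q *ᵥ xhat t + R *ᵥ uhat t) -
        P *ᵥ (Ahat *ᵥ xhat t + Bhat *ᵥ uhat t) - S *ᵥ uhat') t :=
    ((hx.fun_sub (hasDerivAt_mulVec P hxhat)).fun_sub
      (hasDerivAt_mulVec S huhat)).congr_of_eventuallyEq (.of_forall he)
  rwa [mulVec_closedLoop_sub_mulVec_reduced A B Ahat Bhat K Q R P S (he t)] at he'

end Derivative

/-- Error dynamics under the interface function: if
`x'(t) = A x(t) + B (K e(t) + Q xhat(t) + R uhat(t))` with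
`e(s) = x(s) − P xhat(s) − S uhat(s)`, and `xhat'(t) = Ahat xhat(t) + Bhat uhat(t)`,
and `uhat` has derivative `uhat'` at `t`, then `e` is differentiable at `t` with
`e'(t) = (A+BK) e(t) + (AP − P Ahat + BQ) xhat(t) + (AS + BR − P Bhat) uhat(t) − S uhat'`. -/
theorem error_dynamics {n m nr mr : ℕ}
    (A : Matrix (Fin n) (Fin n) ℝ) (B : Matrix (Fin n) (Fin m) ℝ)
    (Ahat : Matrix (Fin nr) (Fin nr) ℝ) (Bhat : Matrix (Fin nr) (Fin mr) ℝ)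
    (K : Matrix (Fin m) (Fin n) ℝ) (Q : Matrix (Fin m) (Fin nr) ℝ)
    (R : Matrix (Fin m) (Fin mr) ℝ)
    (P : Matrix (Fin n) (Fin nr) ℝ) (S : Matrix (Fin n) (Fin mr) ℝ)
    (x : ℝ → Fin n → ℝ) (xhat : ℝ → Fin nr → ℝ) (uhat : ℝ → Fin mr → ℝ)
    (e : ℝ → Fin n → ℝ)
    (he : ∀ s, e s = x s - P.mulVec (xhat s) - S.mulVec (uhat s))
    (t : ℝ) (uhat' : Fin mr → ℝ)
    (hx : HasDerivAt x
      (A.mulVec (x t) + B.mulVec (K.mulVec (e t) + Q.mulVec (xhat t) + R.mulVec (uhat t))) t)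
    (hxhat : HasDerivAt xhat (Ahat.mulVec (xhat t) + Bhat.mulVec (uhat t)) t)
    (huhat : HasDerivAt uhat uhat' t) :
    HasDerivAt e
      ((A + B * K).mulVec (e t) + (A * P - P * Ahat + B * Q).mulVec (xhat t) +
        (A * S + B * R - P * Bhat).mulVec (uhat t) - S.mulVec uhat') t :=
  error_dynamics_general A B Ahat Bhat K Q R P S he hx hxhat huhat
end
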